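/- Let β ∈ (0, 1]. Then for every real t, Re G_{β,0}(it) = ∫₀^∞ exp(−y^{β+1}/(β+1))·cos(t y) dy > 0. Consequently, in the case ν = 0 and β ∈ (0,1], for no ϑ > 0 and no real t ≠ 0 does the eigenvalue equation ϑ·(it) + G_{β,0}(it) = 0 hold; i.e., no purely imaginary eigenvalue and hence no Hopf bifurcation occurs for any value of the removal parameter. -/

import Mathlib

/-- The characteristic function `G_{β,μ}(λ) = ∫₀^∞ z^μ exp(−z^{β+1}/(β+1)) e^{−λz} dz`
of the linearized Becker–Döring bubblelator limit model. -/
noncomputable def G (β μ : ℝ) (l : ℂ) : ℂ :=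
  ∫ z in Set.Ioi (0 : ℝ),
    ((z ^ μ * Real.exp (-z ^ (β + 1) / (β + 1)) : ℝ) : ℂ) * Complex.exp (-l * (z : ℂ))

/-!
The function `y ↦ exp (-c * y ^ a)`, `0 < a ≤ 2`, is a mixture of Gaussians. For `a < 2`, the sum
of `h v = A * v ^ (-2 / a)` over the points `v` of a unit-rate Poisson process on `(0, ∞)` has
Laplace transform `s ↦ exp (-∫ (1 - exp (-(h v * s))) dv)`, which by scaling is
`exp (-c * s ^ (a / 2))` for a suitable `A`; then put `s = y ^ 2`. Approximating the process by `n`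
independent uniform points on `(0, n]`, only the limit `(1 + x / n) ^ n → exp x` is needed.

The cosine transform `F` of a Gaussian mixture satisfies `F t ^ 2 ≤ F 0 * F (√2 * t)`: a Gaussian
integrates `x ^ 2 + 2 * x * cos (t * y) + cos (√2 * t * y)` to a multiple of a perfect square, so
the integral of this function against the mixture is a nonnegative quadratic polynomial in `x`.
Hence `F t ≤ 0` would propagate to `t / √2 ^ n` for all `n`, and by continuity to `F 0 ≤ 0`.
-/

section

open MeasureTheory Set Filter Topology

section StableExponent

variable {p b : ℝ}

lemma integrableOn_one_sub_exp_neg_mul_rpow (hp : 1 < p) (hb : 0 ≤ b) :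
    IntegrableOn (fun v ↦ 1 - Real.exp (-(b * v ^ (-p)))) (Ioi 0) := by
  have hmeas : Measurable fun v : ℝ ↦ 1 - Real.exp (-(b * v ^ (-p))) := by fun_prop
  have hnonneg {v : ℝ} (hv : 0 < v) : 0 ≤ 1 - Real.exp (-(b * v ^ (-p))) :=
    sub_nonneg.2 (Real.exp_le_one_iff.2 (neg_nonpos.2 (by positivity)))
  rw [← Ioc_union_Ioi_eq_Ioi zero_le_one, integrableOn_union]
  constructor
  · refine Measure.integrableOn_of_bounded (M := 1) (by simp) hmeas.aestronglyMeasurable ?_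
    filter_upwards [ae_restrict_mem measurableSet_Ioc] with v hv
    rw [Real.norm_of_nonneg (hnonneg hv.1)]
    exact sub_le_self 1 (Real.exp_pos _).le
  · refine ((integrableOn_Ioi_rpow_of_lt (neg_lt_neg hp) one_pos).const_mul b).mono'
      hmeas.aestronglyMeasurable ?_
    filter_upwards [ae_restrict_mem measurableSet_Ioi] with v hv
    rw [Real.norm_of_nonneg (hnonneg (one_pos.trans hv))]
    linarith [Real.add_one_le_exp (-(b * v ^ (-p)))]

lemma integral_one_sub_exp_neg_rpow_pos (hp : 1 < p) :
    0 < ∫ v in Ioi (0 : ℝ), (1 - Real.exp (-v ^ (-p))) := by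
  have hpos (v : ℝ) (hv : v ∈ Ioi 0) : 0 < 1 - Real.exp (-v ^ (-p)) :=
    sub_pos.2 (Real.exp_lt_one_iff.2 (neg_neg_of_pos (Real.rpow_pos_of_pos hv _)))
  have hint := integrableOn_one_sub_exp_neg_mul_rpow hp zero_le_one
  simp only [one_mul] at hint
  rw [setIntegral_pos_iff_support_of_nonneg_ae
    (ae_restrict_of_forall_mem measurableSet_Ioi fun v hv ↦ (hpos v hv).le) hint,
    inter_eq_right.2 (fun v hv ↦ Function.mem_support.2 (hpos v hv).ne'), Real.volume_Ioi]
  exact ENNReal.zero_lt_top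

lemma integral_one_sub_exp_neg_mul_rpow (hp : 0 < p) (hb : 0 ≤ b) :
    ∫ v in Ioi (0 : ℝ), (1 - Real.exp (-(b * v ^ (-p)))) =
      b ^ p⁻¹ * ∫ v in Ioi (0 : ℝ), (1 - Real.exp (-v ^ (-p))) := by
  obtain rfl | hb := hb.eq_or_lt
  · simp [Real.zero_rpow (inv_ne_zero hp.ne')]
  have hscale := integral_comp_mul_left_Ioi' (fun v ↦ 1 - Real.exp (-(b * v ^ (-p)))) 0
    (Real.rpow_pos_of_pos hb p⁻¹)
  rw [mul_zero, smul_eq_mul] at hscale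
  rw [← hscale]
  congr 1
  refine setIntegral_congr_fun measurableSet_Ioi fun v hv ↦ ?_
  have hcancel : b * (b ^ p⁻¹ * v) ^ (-p) = v ^ (-p) := by
    rw [Real.mul_rpow (by positivity) (le_of_lt hv), ← Real.rpow_mul hb.le, mul_neg,
      inv_mul_cancel₀ hp.ne', Real.rpow_neg_one, mul_inv_cancel_left₀ hb.ne']
  simp only [hcancel]

end StableExponent

section LaplaceNonneg

variable {α : Type*} [MeasurableSpace α] {ρ : Measure α} {s K : α → ℝ}

lemma abs_exp_neg_mul_mul_le {a b : ℝ} (ha : 0 ≤ a) (hb : 0 ≤ b) (c : ℝ) :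
    |Real.exp (-(a * b)) * c| ≤ |c| := by
  rw [abs_mul, Real.abs_exp]
  exact mul_le_of_le_one_left (abs_nonneg c) (Real.exp_le_one_iff.2 (by nlinarith))

lemma integral_integral_exp_neg_mul_nonneg [SFinite ρ] {Ω : Type*} [MeasurableSpace Ω]
    {μ : Measure Ω} [IsFiniteMeasure μ] {X : Ω → ℝ} (hX : Measurable X) (hX₀ : ∀ ω, 0 ≤ X ω)
    (hs : Measurable s) (hs₀ : ∀ x, 0 ≤ s x) (hK : Integrable K ρ)
    (hKs : ∀ u, 0 ≤ u → 0 ≤ ∫ x, Real.exp (-(u * s x)) * K x ∂ρ) :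
    0 ≤ ∫ x, (∫ ω, Real.exp (-(X ω * s x)) ∂μ) * K x ∂ρ := by
  have hint : Integrable (Function.uncurry fun x ω ↦ Real.exp (-(X ω * s x)) * K x)
      (ρ.prod μ) := by
    refine (hK.norm.comp_fst μ).mono' ?_ (.of_forall fun p ↦ ?_)
    · exact (by fun_prop : Measurable fun p : α × Ω ↦ Real.exp (-(X p.2 * s p.1)))
        |>.aestronglyMeasurable.mul hK.aestronglyMeasurable.comp_fst
    · exact abs_exp_neg_mul_mul_le (hX₀ p.2) (hs₀ p.1) (K p.1)
  simp_rw [← integral_mul_const]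
  rw [integral_integral_swap hint]
  exact integral_nonneg fun ω ↦ hKs (X ω) (hX₀ ω)

lemma integral_integral_exp_neg_mul_pow_nonneg [SFinite ρ] {Ω : Type*} [MeasurableSpace Ω]
    {μ : Measure Ω} [IsFiniteMeasure μ] {X : Ω → ℝ} (hX : Measurable X) (hX₀ : ∀ ω, 0 ≤ X ω)
    (hs : Measurable s) (hs₀ : ∀ x, 0 ≤ s x) (hK : Integrable K ρ)
    (hKs : ∀ u, 0 ≤ u → 0 ≤ ∫ x, Real.exp (-(u * s x)) * K x ∂ρ) (n : ℕ) :
    0 ≤ ∫ x, (∫ ω, Real.exp (-(X ω * s x)) ∂μ) ^ n * K x ∂ρ := by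
  -- The power is the Laplace transform of the sum of `n` independent copies of `X`.
  have hpow (x : α) : (∫ ω, Real.exp (-(X ω * s x)) ∂μ) ^ n =
      ∫ ω, Real.exp (-((∑ i, X (ω i)) * s x)) ∂Measure.pi fun _ : Fin n ↦ μ := by
    simp_rw [Finset.sum_mul, ← Finset.sum_neg_distrib, Real.exp_sum]
    rw [integral_fintype_prod_eq_pow fun ω ↦ Real.exp (-(X ω * s x)), Fintype.card_fin]
  simp_rw [hpow]
  exact integral_integral_exp_neg_mul_nonneg (X := fun ω : Fin n → Ω ↦ ∑ i, X (ω i))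
    (by fun_prop) (fun ω ↦ Finset.sum_nonneg fun i _ ↦ hX₀ (ω i)) hs hs₀ hK hKs

lemma tendsto_average_pow_exp_neg_integral {f : ℝ → ℝ}
    (hf : IntegrableOn (fun v ↦ 1 - f v) (Ioi 0)) :
    Tendsto (fun n : ℕ ↦ ((n : ℝ)⁻¹ * ∫ v in Ioc 0 (n : ℝ), f v) ^ n) atTop
      (𝓝 (Real.exp (-∫ v in Ioi 0, (1 - f v)))) := by
  have hlim : Tendsto (fun n : ℕ ↦ -∫ v in Ioc 0 (n : ℝ), (1 - f v)) atTop
      (𝓝 (-∫ v in Ioi 0, (1 - f v))) := by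
    simpa only [intervalIntegral.integral_of_le (Nat.cast_nonneg _)] using
      (intervalIntegral_tendsto_integral_Ioi 0 hf tendsto_natCast_atTop_atTop).neg
  have haverage (n : ℕ) (hn : (n : ℝ) ≠ 0) :
      (n : ℝ)⁻¹ * ∫ v in Ioc 0 (n : ℝ), f v =
        1 + (n : ℝ)⁻¹ * -∫ v in Ioc 0 (n : ℝ), (1 - f v) := by
    have hsplit : ∫ v in Ioc 0 (n : ℝ), f v = n - ∫ v in Ioc 0 (n : ℝ), (1 - f v) := by
      simpa using integral_sub (integrable_const (1 : ℝ))
        (hf.mono_set (Ioc_subset_Ioi_self : Ioc 0 (n : ℝ) ⊆ Ioi 0))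
    rw [hsplit, mul_sub, inv_mul_cancel₀ hn, mul_neg, sub_eq_add_neg]
  refine (Real.tendsto_one_add_pow_exp_of_tendsto
    (g := fun n ↦ (n : ℝ)⁻¹ * -∫ v in Ioc 0 (n : ℝ), (1 - f v)) (hlim.congr' ?_)).congr' ?_
  · filter_upwards [eventually_ne_atTop 0] with n hn
    rw [mul_inv_cancel_left₀ (Nat.cast_ne_zero.2 hn)]
  · filter_upwards [eventually_ne_atTop 0] with n hn
    rw [haverage n (Nat.cast_ne_zero.2 hn)]

lemma abs_average_le_one {f : ℝ → ℝ} (hf : ∀ v, |f v| ≤ 1) (n : ℕ) :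
    |(n : ℝ)⁻¹ * ∫ v in Ioc 0 (n : ℝ), f v| ≤ 1 := by
  have hint : |∫ v in Ioc 0 (n : ℝ), f v| ≤ n := by
    simpa using norm_setIntegral_le_of_norm_le_const (f := f) (s := Ioc 0 (n : ℝ)) (μ := volume)
      (by simp) fun v _ ↦ hf v
  rw [abs_mul, abs_inv, Nat.abs_cast]
  exact inv_mul_le_one_of_le₀ hint n.cast_nonneg

lemma integral_exp_neg_integral_one_sub_exp_mul_nonneg [SFinite ρ] {h : ℝ → ℝ} (hh : Measurable h)
    (hh₀ : ∀ v, 0 ≤ h v) (hs : Measurable s) (hs₀ : ∀ x, 0 ≤ s x)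
    (hhs : ∀ x, IntegrableOn (fun v ↦ 1 - Real.exp (-(h v * s x))) (Ioi 0))
    (hK : Integrable K ρ) (hKs : ∀ u, 0 ≤ u → 0 ≤ ∫ x, Real.exp (-(u * s x)) * K x ∂ρ) :
    0 ≤ ∫ x, Real.exp (-∫ v in Ioi 0, (1 - Real.exp (-(h v * s x)))) * K x ∂ρ := by
  let A (n : ℕ) (x : α) : ℝ := (n : ℝ)⁻¹ * ∫ v in Ioc 0 (n : ℝ), Real.exp (-(h v * s x))
  have hA_meas (n : ℕ) : StronglyMeasurable (A n) :=
    StronglyMeasurable.const_mul (StronglyMeasurable.integral_prod_right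
      (f := fun x v ↦ Real.exp (-(h v * s x))) (by fun_prop)) _
  have hA_le (n : ℕ) (x : α) : |A n x| ≤ 1 := abs_average_le_one (fun v ↦ by
    simpa using abs_exp_neg_mul_mul_le (hh₀ v) (hs₀ x) 1) n
  have hA_nonneg (n : ℕ) : 0 ≤ ∫ x, A n x ^ n * K x ∂ρ := by
    simp_rw [A, mul_pow, mul_assoc]
    rw [integral_const_mul]
    exact mul_nonneg (by positivity)
      (integral_integral_exp_neg_mul_pow_nonneg hh hh₀ hs hs₀ hK hKs n)
  refine ge_of_tendsto' (tendsto_integral_of_dominated_convergence (fun x ↦ |K x|)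
    (fun n ↦ ((hA_meas n).pow n).aestronglyMeasurable.mul hK.aestronglyMeasurable) hK.abs
    (fun n ↦ .of_forall fun x ↦ ?_) (.of_forall fun x ↦ ?_)) hA_nonneg
  · change |A n x ^ n * K x| ≤ |K x|
    rw [abs_mul, abs_pow]
    exact mul_le_of_le_one_left (abs_nonneg _) (pow_le_one₀ (abs_nonneg _) (hA_le n x))
  · exact (tendsto_average_pow_exp_neg_integral (hhs x)).mul_const _

lemma integral_exp_neg_mul_rpow_mul_nonneg_of_integrable [SFinite ρ] {γ c : ℝ} (hγ₀ : 0 < γ)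
    (hγ₁ : γ ≤ 1) (hc : 0 ≤ c) (hs : Measurable s) (hs₀ : ∀ x, 0 ≤ s x)
    (hK : Integrable K ρ) (hKs : ∀ u, 0 ≤ u → 0 ≤ ∫ x, Real.exp (-(u * s x)) * K x ∂ρ) :
    0 ≤ ∫ x, Real.exp (-(c * s x ^ γ)) * K x ∂ρ := by
  obtain rfl | hγ₁ := hγ₁.eq_or_lt
  · simpa only [Real.rpow_one] using hKs c hc
  have hp : 1 < γ⁻¹ := (one_lt_inv₀ hγ₀).2 hγ₁
  set C : ℝ := ∫ v in Ioi (0 : ℝ), (1 - Real.exp (-v ^ (-γ⁻¹)))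
  have hC : 0 < C := integral_one_sub_exp_neg_rpow_pos hp
  set a : ℝ := (c / C) ^ γ⁻¹
  have ha : 0 ≤ a := by positivity
  -- The jump function must be nonnegative on all of `ℝ`, hence `|v|`.
  have hjump (x : α) : EqOn (fun v ↦ 1 - Real.exp (-(a * |v| ^ (-γ⁻¹) * s x)))
      (fun v ↦ 1 - Real.exp (-(a * s x * v ^ (-γ⁻¹)))) (Ioi 0) := fun v hv ↦ by
    simp only [abs_of_pos (mem_Ioi.1 hv), mul_right_comm a]
  have hexponent (x : α) :
      ∫ v in Ioi 0, (1 - Real.exp (-(a * |v| ^ (-γ⁻¹) * s x))) = c * s x ^ γ := by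
    rw [setIntegral_congr_fun measurableSet_Ioi (hjump x),
      integral_one_sub_exp_neg_mul_rpow (one_pos.trans hp) (mul_nonneg ha (hs₀ x)), inv_inv,
      Real.mul_rpow ha (hs₀ x), Real.rpow_inv_rpow (by positivity) hγ₀.ne',
      mul_right_comm, div_mul_cancel₀ _ hC.ne']
  simp_rw [← hexponent]
  exact integral_exp_neg_integral_one_sub_exp_mul_nonneg (by fun_prop) (fun v ↦ by positivity)
    hs hs₀ (fun x ↦ (integrableOn_one_sub_exp_neg_mul_rpow hp (mul_nonneg ha (hs₀ x))).congr_fun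
      (hjump x).symm measurableSet_Ioi) hK hKs

theorem integral_exp_neg_mul_rpow_mul_nonneg [SFinite ρ] {γ c : ℝ} (hγ₀ : 0 < γ) (hγ₁ : γ ≤ 1)
    (hc : 0 ≤ c) (hs : Measurable s) (hs₀ : ∀ x, 0 ≤ s x)
    (hK : Integrable (fun x ↦ Real.exp (-(c * s x ^ γ)) * K x) ρ)
    (hKi : ∀ u, 0 < u → Integrable (fun x ↦ Real.exp (-(u * s x)) * K x) ρ)
    (hKs : ∀ u, 0 < u → 0 ≤ ∫ x, Real.exp (-(u * s x)) * K x ∂ρ) :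
    0 ≤ ∫ x, Real.exp (-(c * s x ^ γ)) * K x ∂ρ := by
  have hdamped (δ : ℝ) (hδ : 0 < δ) :
      0 ≤ ∫ x, Real.exp (-(δ * s x)) * (Real.exp (-(c * s x ^ γ)) * K x) ∂ρ := by
    simp_rw [mul_left_comm (Real.exp (-(δ * s _)))]
    refine integral_exp_neg_mul_rpow_mul_nonneg_of_integrable hγ₀ hγ₁ hc hs hs₀ (hKi δ hδ)
      fun u hu ↦ ?_
    simp_rw [← mul_assoc, ← Real.exp_add, ← neg_add, ← add_mul]
    exact hKs _ (by positivity)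
  have hlim : Tendsto (fun δ ↦ ∫ x, Real.exp (-(δ * s x)) * (Real.exp (-(c * s x ^ γ)) * K x) ∂ρ)
      (𝓝[>] 0) (𝓝 (∫ x, Real.exp (-(c * s x ^ γ)) * K x ∂ρ)) := by
    refine tendsto_integral_filter_of_dominated_convergence _ (.of_forall fun δ ↦
      (by fun_prop : Measurable fun x ↦ Real.exp (-(δ * s x))).aestronglyMeasurable.mul
        hK.aestronglyMeasurable) ?_ hK.abs (.of_forall fun x ↦ ?_)
    · filter_upwards [self_mem_nhdsWithin] with δ hδ
      exact .of_forall fun x ↦ abs_exp_neg_mul_mul_le (le_of_lt hδ) (hs₀ x) _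
    · refine tendsto_nhdsWithin_of_tendsto_nhds (Continuous.tendsto' (by fun_prop) _ _ (by simp))
  exact ge_of_tendsto hlim (eventually_mem_nhdsWithin.mono hdamped)

end LaplaceNonneg

section CosTransform

/-- The cosine transform of a function on `(0, ∞)`, i.e. half the Fourier transform of its even
extension. -/
noncomputable def cosTransform (f : ℝ → ℝ) (t : ℝ) : ℝ :=
  ∫ y in Ioi 0, f y * Real.cos (t * y)

/-- `f` lies in the closed convex cone generated by the Gaussians `y ↦ exp (-u * y ^ 2)`, `u > 0`,
as functions on `(0, ∞)`. The cone is encoded by duality, so that no mixing measure has to be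
constructed: every bounded continuous `q` that integrates nonnegatively against the Gaussians does
so against `f`. Meant for `f` integrable on `(0, ∞)`; otherwise the last integral may be the junk
value `0`. -/
def MemGaussianCone (f : ℝ → ℝ) : Prop :=
  ∀ q : ℝ → ℝ, Continuous q → (∃ M, ∀ y, |q y| ≤ M) →
    (∀ u, 0 < u → 0 ≤ ∫ y in Ioi 0, Real.exp (-u * y ^ 2) * q y) →
    0 ≤ ∫ y in Ioi 0, f y * q y

variable {f : ℝ → ℝ}

lemma cosTransform_zero : cosTransform f 0 = ∫ y in Ioi 0, f y := by
  simp [cosTransform]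

lemma integrableOn_mul_cos (hf : IntegrableOn f (Ioi 0)) (t : ℝ) :
    IntegrableOn (fun y ↦ f y * Real.cos (t * y)) (Ioi 0) :=
  hf.mul_bdd (c := 1) (by fun_prop) (.of_forall fun y ↦ Real.abs_cos_le_one _)

lemma continuous_cosTransform (hf : IntegrableOn f (Ioi 0)) : Continuous (cosTransform f) := by
  refine continuous_of_dominated (bound := fun y ↦ |f y|)
    (fun t ↦ (integrableOn_mul_cos hf t).aestronglyMeasurable)
    (fun t ↦ .of_forall fun y ↦ ?_) hf.abs (.of_forall fun y ↦ by fun_prop)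
  rw [Real.norm_eq_abs, abs_mul]
  exact mul_le_of_le_one_right (abs_nonneg _) (Real.abs_cos_le_one _)

lemma integral_mul_quadratic_cos (hf : IntegrableOn f (Ioi 0)) (x t r : ℝ) :
    ∫ y in Ioi 0, f y * (x * x + 2 * x * Real.cos (t * y) + Real.cos (r * y)) =
      cosTransform f 0 * (x * x) + 2 * cosTransform f t * x + cosTransform f r := by
  have hterm (y : ℝ) : f y * (x * x + 2 * x * Real.cos (t * y) + Real.cos (r * y)) =
      x * x * f y + 2 * x * (f y * Real.cos (t * y)) + f y * Real.cos (r * y) := by ring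
  have hx := hf.const_mul (x * x)
  have ht := (integrableOn_mul_cos hf t).const_mul (2 * x)
  simp_rw [hterm]
  have hxt : Integrable (fun y ↦ x * x * f y + 2 * x * (f y * Real.cos (t * y)))
      (volume.restrict (Ioi 0)) := hx.add ht
  rw [integral_add hxt (integrableOn_mul_cos hf r), integral_add hx ht, integral_const_mul,
    integral_const_mul, cosTransform_zero, cosTransform, cosTransform]
  ring

lemma re_integral_ofReal_mul_cexp {μ : Measure ℝ} (hf : Integrable f μ) (t : ℝ) :
    (∫ y, (f y : ℂ) * Complex.exp (Complex.I * t * y) ∂μ).re =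
      ∫ y, f y * Real.cos (t * y) ∂μ := by
  have hphase (y : ℝ) : Complex.I * t * y = ((t * y : ℝ) : ℂ) * Complex.I := by
    push_cast
    ring
  have hint : Integrable (fun y ↦ (f y : ℂ) * Complex.exp (Complex.I * t * y)) μ :=
    hf.ofReal.mul_bdd (c := 1) (by fun_prop) (.of_forall fun y ↦ by
      rw [hphase, Complex.norm_exp_ofReal_mul_I])
  rw [← RCLike.re_eq_complex_re, ← integral_re hint]
  simp_rw [RCLike.re_eq_complex_re, Complex.re_ofReal_mul, hphase, Complex.exp_ofReal_mul_I_re]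

lemma cosTransform_exp_neg_mul_sq {u : ℝ} (hu : 0 < u) (t : ℝ) :
    cosTransform (fun y ↦ Real.exp (-u * y ^ 2)) t =
      √(Real.pi / u) / 2 * Real.exp (-t ^ 2 / (4 * u)) := by
  have hline : ∫ y : ℝ, Real.exp (-u * y ^ 2) * Real.cos (t * y) =
      √(Real.pi / u) * Real.exp (-t ^ 2 / (4 * u)) := by
    have hsqrt : ((Real.pi / u : ℝ) : ℂ) ^ (1 / 2 : ℂ) = (√(Real.pi / u) : ℝ) := by
      rw [Real.sqrt_eq_rpow, Complex.ofReal_cpow (by positivity)]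
      norm_num
    have hgauss := fourierIntegral_gaussian (b := (u : ℂ)) (by simpa using hu) t
    rw [← re_integral_ofReal_mul_cexp (integrable_exp_neg_mul_sq hu), ← Complex.ofReal_re (_ * _)]
    push_cast at hsqrt ⊢
    rw [← hsqrt, ← hgauss]
    simp only [mul_comm (Complex.exp (Complex.I * _ * _))]
  have heven := integral_comp_abs (f := fun y ↦ Real.exp (-u * y ^ 2) * Real.cos (t * y))
  have habs (y : ℝ) : Real.cos (t * |y|) = Real.cos (t * y) := by
    rw [← Real.cos_abs, ← Real.cos_abs (t * y), abs_mul, abs_mul, abs_abs]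
  simp only [sq_abs, habs, hline] at heven
  rw [cosTransform]
  linarith

namespace MemGaussianCone

lemma sq_cosTransform_le (hf : MemGaussianCone f) (hfi : IntegrableOn f (Ioi 0)) (t : ℝ) :
    cosTransform f t ^ 2 ≤ cosTransform f 0 * cosTransform f (√2 * t) := by
  have hquadratic (x : ℝ) :
      0 ≤ cosTransform f 0 * (x * x) + 2 * cosTransform f t * x + cosTransform f (√2 * t) := by
    rw [← integral_mul_quadratic_cos hfi]
    refine hf _ (by fun_prop) ⟨|x * x| + |2 * x| + 1, fun y ↦ ?_⟩ fun u hu ↦ ?_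
    · refine (abs_add_three _ _ _).trans (add_le_add_three le_rfl ?_ (Real.abs_cos_le_one _))
      rw [abs_mul (2 * x)]
      exact mul_le_of_le_one_right (abs_nonneg _) (Real.abs_cos_le_one _)
    · rw [integral_mul_quadratic_cos (integrable_exp_neg_mul_sq hu).integrableOn]
      have hexp : Real.exp (-(√2 * t) ^ 2 / (4 * u)) = Real.exp (-t ^ 2 / (4 * u)) ^ 2 := by
        rw [← Real.exp_nat_mul, mul_pow, Real.sq_sqrt zero_le_two]
        push_cast
        ring_nf
      have hexp_zero : Real.exp (-0 ^ 2 / (4 * u)) = 1 := by simp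
      simp only [cosTransform_exp_neg_mul_sq hu, hexp, hexp_zero]
      calc 0 ≤ √(Real.pi / u) / 2 * (x + Real.exp (-t ^ 2 / (4 * u))) ^ 2 := by positivity
        _ = _ := by ring
  have hdiscrim := discrim_le_zero hquadratic
  rw [discrim] at hdiscrim
  linarith

theorem cosTransform_pos (hf : MemGaussianCone f) (hfi : IntegrableOn f (Ioi 0))
    (hpos : 0 < ∫ y in Ioi 0, f y) (t : ℝ) : 0 < cosTransform f t := by
  rw [← cosTransform_zero] at hpos
  by_contra! ht
  have hscale (n : ℕ) : cosTransform f (t / √2 ^ n) ≤ 0 := by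
    induction n with
    | zero => simpa using ht
    | succ n ih =>
      have hsq := hf.sq_cosTransform_le hfi (t / √2 ^ (n + 1))
      have hdouble : √2 * (t / √2 ^ (n + 1)) = t / √2 ^ n := by rw [pow_succ]; field_simp
      rw [hdouble] at hsq
      have hsq_nonpos := hsq.trans (mul_nonpos_of_nonneg_of_nonpos hpos.le ih)
      exact (sq_nonpos_iff _).1 hsq_nonpos |>.le
  have hzero : Tendsto (fun n : ℕ ↦ t / √2 ^ n) atTop (𝓝 0) :=
    tendsto_const_nhds.div_atTop (tendsto_pow_atTop_atTop_of_one_lt Real.one_lt_sqrt_two)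
  exact hpos.not_ge (le_of_tendsto'
    (((continuous_cosTransform hfi).tendsto 0).comp hzero) hscale)

end MemGaussianCone

lemma integral_exp_neg_mul_rpow_pos {a c : ℝ} (ha : 0 < a) (hc : 0 < c) :
    0 < ∫ y in Ioi (0 : ℝ), Real.exp (-c * y ^ a) := by
  rw [integral_exp_neg_mul_rpow ha hc]
  exact mul_pos (by positivity) (Real.Gamma_pos_of_pos (by positivity))

lemma integrableOn_exp_neg_mul_rpow {a c : ℝ} (ha : 0 < a) (hc : 0 < c) :
    IntegrableOn (fun y ↦ Real.exp (-c * y ^ a)) (Ioi 0) :=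
  .of_integral_ne_zero (integral_exp_neg_mul_rpow_pos ha hc).ne'

lemma memGaussianCone_exp_neg_mul_rpow {a c : ℝ} (ha₀ : 0 < a) (ha₂ : a ≤ 2) (hc : 0 < c) :
    MemGaussianCone fun y ↦ Real.exp (-c * y ^ a) := by
  intro q hq ⟨M, hM⟩ hqs
  have hbdd {g : ℝ → ℝ} (hg : IntegrableOn g (Ioi 0) volume) :
      IntegrableOn (fun y ↦ g y * q y) (Ioi 0) volume :=
    hg.mul_bdd (c := M) hq.aestronglyMeasurable (.of_forall hM)
  have hgauss (u : ℝ) (hu : 0 < u) :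
      IntegrableOn (fun y ↦ Real.exp (-(u * y ^ 2)) * q y) (Ioi 0) := by
    simpa only [neg_mul] using hbdd (integrable_exp_neg_mul_sq hu).integrableOn
  have hpow : EqOn (fun y ↦ Real.exp (-c * y ^ a) * q y)
      (fun y ↦ Real.exp (-(c * (y ^ 2) ^ (a / 2))) * q y) (Ioi 0) := fun y hy ↦ by
    simp only [← Real.rpow_natCast_mul (le_of_lt hy), Nat.cast_ofNat,
      mul_div_cancel₀ a two_ne_zero, neg_mul]
  rw [setIntegral_congr_fun measurableSet_Ioi hpow]
  simp only [neg_mul] at hqs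
  exact integral_exp_neg_mul_rpow_mul_nonneg (by positivity) (by linarith) hc.le (by fun_prop)
    (fun y ↦ sq_nonneg y)
    ((hbdd (integrableOn_exp_neg_mul_rpow ha₀ hc)).congr_fun hpow measurableSet_Ioi)
    hgauss hqs

theorem cosTransform_exp_neg_mul_rpow_pos {a c : ℝ} (ha₀ : 0 < a) (ha₂ : a ≤ 2) (hc : 0 < c)
    (t : ℝ) : 0 < cosTransform (fun y ↦ Real.exp (-c * y ^ a)) t :=
  (memGaussianCone_exp_neg_mul_rpow ha₀ ha₂ hc).cosTransform_pos
    (integrableOn_exp_neg_mul_rpow ha₀ hc) (integral_exp_neg_mul_rpow_pos ha₀ hc) t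

end CosTransform

lemma exp_neg_rpow_div_eq (β y : ℝ) :
    Real.exp (-y ^ (β + 1) / (β + 1)) = Real.exp (-(β + 1)⁻¹ * y ^ (β + 1)) := by
  rw [neg_div, div_eq_inv_mul, neg_mul]

lemma re_G_zero_I_mul {β : ℝ} (hβ : -1 < β) (t : ℝ) :
    (G β 0 (Complex.I * t)).re =
      cosTransform (fun y ↦ Real.exp (-(β + 1)⁻¹ * y ^ (β + 1))) t := by
  have hβ_add : 0 < β + 1 := by linarith
  have hre := re_integral_ofReal_mul_cexp
    (integrableOn_exp_neg_mul_rpow hβ_add (inv_pos.2 hβ_add)) (-t)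
  simpa [G, cosTransform, exp_neg_rpow_div_eq] using hre

lemma re_G_zero_I_mul_pos {β : ℝ} (hβ₀ : -1 < β) (hβ₁ : β ≤ 1) (t : ℝ) :
    0 < (G β 0 (Complex.I * t)).re := by
  have hβ : 0 < β + 1 := by linarith
  rw [re_G_zero_I_mul hβ₀]
  exact cosTransform_exp_neg_mul_rpow_pos hβ (by linarith) (inv_pos.2 hβ) t

theorem stmt12_general {β : ℝ} (hβ₀ : -1 < β) (hβ₁ : β ≤ 1) :
    (∀ t : ℝ,
      (G β 0 (Complex.I * t)).re
          = (∫ y in Ioi (0 : ℝ), Real.exp (-y ^ (β + 1) / (β + 1)) * Real.cos (t * y)) ∧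
        0 < (G β 0 (Complex.I * t)).re) ∧
    ∀ ϑ t : ℝ, (ϑ : ℂ) * (Complex.I * t) + G β 0 (Complex.I * t) ≠ 0 := by
  refine ⟨fun t ↦ ⟨?_, re_G_zero_I_mul_pos hβ₀ hβ₁ t⟩, fun ϑ t heigen ↦ ?_⟩
  · simp only [re_G_zero_I_mul hβ₀, cosTransform, exp_neg_rpow_div_eq]
  · have hre : (G β 0 (Complex.I * t)).re = 0 := by simpa using congrArg Complex.re heigen
    exact (re_G_zero_I_mul_pos hβ₀ hβ₁ t).ne' hre

end

/-- For `β ∈ (0,1]`: `Re G_{β,0}(it) = ∫₀^∞ exp(−y^{β+1}/(β+1)) cos(ty) dy > 0`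
for every real `t`, and consequently no purely imaginary eigenvalue (hence no
Hopf bifurcation) exists for any `ϑ > 0`. -/
theorem stmt12 (β : ℝ) (hβ0 : 0 < β) (hβ1 : β ≤ 1) :
    (∀ t : ℝ,
      (G β 0 (Complex.I * (t : ℂ))).re
          = (∫ y in Set.Ioi (0 : ℝ),
              Real.exp (-y ^ (β + 1) / (β + 1)) * Real.cos (t * y)) ∧
        0 < (G β 0 (Complex.I * (t : ℂ))).re) ∧
    ∀ ϑ : ℝ, 0 < ϑ → ∀ t : ℝ, t ≠ 0 →
      (ϑ : ℂ) * (Complex.I * (t : ℂ)) + G β 0 (Complex.I * (t : ℂ)) ≠ 0 := by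
  obtain ⟨hre, hne⟩ := stmt12_general (neg_one_lt_zero.trans hβ0) hβ1
  exact ⟨hre, fun ϑ _ t _ ↦ hne ϑ t⟩
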